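/- (Baracco–Zaitsev–Zampieri) Let f : 𝔻 → 𝔻 be holomorphic and let (z_n) be a sequence in 𝔻 converging to 1 nontangentially, i.e. z_n → 1 and there is a constant M > 0 with |1 − z_n| ≤ M (1 − |z_n|) for all n. If f(z_n) = z_n + o(|1 − z_n|³) as n → ∞ (i.e. (f(z_n) − z_n)/|1 − z_n|³ → 0), then f(z) = z for all z ∈ 𝔻. -/

import Mathlib

open Metric Filter

/-!
Let `C w = (1 + w) / (1 - w) = herglotzRieszKernel 0 w 1`, whose real part is the Poisson kernel
`poissonKernel 0 w 1`, and put `h = C ∘ f - C = 2 (f - id) / ((1 - f) (1 - id))`. Tangency at `1`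
makes the ratio `(1 - |f z|²) / (1 - |z|²)` tend to `1`, so Julia's lemma, the boundary limit of
Schwarz–Pick, gives `0 ≤ Re h`. Harnack's inequality forbids a nonzero holomorphic function with
nonnegative real part to decay faster than `1 - |z|` towards the boundary. If
`f z - z = o(|1 - z|² (1 - |z|))`, then `h` decays that fast; hence `h = 0` and `f = id`. In a
nontangential approach region `|1 - z|³ = O(|1 - z|² (1 - |z|))`.
-/

section

open Asymptotics Set Topology ComplexConjugate

lemma one_sub_ne_zero_of_norm_lt_one {R : Type*} [SeminormedRing R] [NormOneClass R] {x : R}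
    (hx : ‖x‖ < 1) : 1 - x ≠ 0 := by
  refine sub_ne_zero.2 ?_
  rintro rfl
  exact hx.ne norm_one

/-- The automorphism of the unit disk that sends `a` to `0`, for `‖a‖ < 1`. -/
noncomputable def diskMobius (a z : ℂ) : ℂ :=
  (z - a) / (1 - conj a * z)

lemma one_sub_conj_mul_ne_zero {a z : ℂ} (ha : ‖a‖ < 1) (hz : ‖z‖ ≤ 1) :
    1 - conj a * z ≠ 0 := by
  refine one_sub_ne_zero_of_norm_lt_one ?_
  rw [norm_mul, RCLike.norm_conj]
  exact mul_lt_one_of_nonneg_of_lt_one_left (norm_nonneg a) ha hz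

lemma norm_one_sub_conj_mul_of_norm_eq_one {ζ : ℂ} (hζ : ‖ζ‖ = 1) (z : ℂ) :
    ‖1 - conj ζ * z‖ = ‖ζ - z‖ := by
  have hconj : conj ζ * ζ = 1 := by simp [RCLike.conj_mul, hζ]
  rw [← hconj, ← mul_sub, norm_mul, RCLike.norm_conj, hζ, one_mul]

lemma norm_sq_one_sub_conj_mul_sub_norm_sq_sub (a z : ℂ) :
    ‖1 - conj a * z‖ ^ 2 - ‖z - a‖ ^ 2 = (1 - ‖a‖ ^ 2) * (1 - ‖z‖ ^ 2) := by
  simp only [← Complex.normSq_eq_norm_sq, Complex.normSq_apply, Complex.sub_re, Complex.sub_im,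
    Complex.mul_re, Complex.mul_im, Complex.conj_re, Complex.conj_im, Complex.one_re,
    Complex.one_im]
  ring

lemma one_sub_norm_diskMobius_sq {a z : ℂ} (ha : ‖a‖ < 1) (hz : ‖z‖ ≤ 1) :
    1 - ‖diskMobius a z‖ ^ 2 =
      (1 - ‖a‖ ^ 2) * (1 - ‖z‖ ^ 2) / ‖1 - conj a * z‖ ^ 2 := by
  have hne : ‖1 - conj a * z‖ ^ 2 ≠ 0 :=
    pow_ne_zero 2 (norm_ne_zero_iff.2 (one_sub_conj_mul_ne_zero ha hz))
  rw [diskMobius, norm_div, div_pow, one_sub_div hne,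
    norm_sq_one_sub_conj_mul_sub_norm_sq_sub]

lemma one_sub_norm_sq_pos {E : Type*} [SeminormedAddGroup E] {z : E} (hz : ‖z‖ < 1) :
    0 < 1 - ‖z‖ ^ 2 :=
  sub_pos.2 (pow_lt_one₀ (norm_nonneg z) hz two_ne_zero)

lemma norm_diskMobius_lt_one {a z : ℂ} (ha : ‖a‖ < 1) (hz : ‖z‖ < 1) :
    ‖diskMobius a z‖ < 1 := by
  have hpos : 0 < 1 - ‖diskMobius a z‖ ^ 2 := by
    rw [one_sub_norm_diskMobius_sq ha hz.le]
    have := one_sub_norm_sq_pos ha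
    have := one_sub_norm_sq_pos hz
    have := norm_pos_iff.2 (one_sub_conj_mul_ne_zero ha hz.le)
    positivity
  exact (sq_lt_one_iff₀ (norm_nonneg _)).1 (sub_pos.1 hpos)

lemma mapsTo_diskMobius {a : ℂ} (ha : ‖a‖ < 1) :
    MapsTo (diskMobius a) (ball 0 1) (ball 0 1) := fun z hz ↦ by
  rw [mem_ball_zero_iff] at hz ⊢
  exact norm_diskMobius_lt_one ha hz

lemma differentiableOn_diskMobius {a : ℂ} (ha : ‖a‖ < 1) :
    DifferentiableOn ℂ (diskMobius a) (ball 0 1) := fun z hz ↦ by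
  have hne := one_sub_conj_mul_ne_zero ha (mem_ball_zero_iff.1 hz).le
  unfold diskMobius
  fun_prop (disch := exact hne)

lemma diskMobius_neg_diskMobius {a z : ℂ} (ha : ‖a‖ < 1) (hz : ‖z‖ < 1) :
    diskMobius (-a) (diskMobius a z) = z := by
  have hne := one_sub_conj_mul_ne_zero ha hz.le
  have hne' := one_sub_conj_mul_ne_zero (a := -a) (by rwa [norm_neg])
    (norm_diskMobius_lt_one ha hz).le
  rw [diskMobius, div_eq_iff hne', diskMobius, map_neg, sub_neg_eq_add]
  linear_combination div_mul_cancel₀ (z - a) hne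

/-- The **Schwarz–Pick lemma**. -/
theorem norm_diskMobius_map_le {f : ℂ → ℂ} (hd : DifferentiableOn ℂ f (ball 0 1))
    (hm : MapsTo f (ball 0 1) (ball 0 1)) {w z : ℂ} (hw : ‖w‖ < 1) (hz : ‖z‖ < 1) :
    ‖diskMobius (f w) (f z)‖ ≤ ‖diskMobius w z‖ := by
  have hw' : ‖-w‖ < 1 := by rwa [norm_neg]
  have hfw : ‖f w‖ < 1 := mem_ball_zero_iff.1 (hm (mem_ball_zero_iff.2 hw))
  have hfm := hm.comp (mapsTo_diskMobius hw')
  have hFd : DifferentiableOn ℂ (diskMobius (f w) ∘ f ∘ diskMobius (-w)) (ball 0 1) :=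
    (differentiableOn_diskMobius hfw).comp
      (hd.comp (differentiableOn_diskMobius hw') (mapsTo_diskMobius hw')) hfm
  have hFm : MapsTo (diskMobius (f w) ∘ f ∘ diskMobius (-w)) (ball 0 1) (closedBall 0 1) :=
    ((mapsTo_diskMobius hfw).comp hfm).mono_right ball_subset_closedBall
  simpa [diskMobius_neg_diskMobius hw hz] using
    Complex.norm_le_norm_of_mapsTo_ball hFd hFm (by simp [diskMobius])
      (norm_diskMobius_lt_one hw hz)

lemma div_norm_sq_one_sub_conj_mul_le {f : ℂ → ℂ} (hd : DifferentiableOn ℂ f (ball 0 1))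
    (hm : MapsTo f (ball 0 1) (ball 0 1)) {w z : ℂ} (hw : ‖w‖ < 1) (hz : ‖z‖ < 1) :
    (1 - ‖w‖ ^ 2) / ‖1 - conj z * w‖ ^ 2 ≤
      (1 - ‖f z‖ ^ 2) / (1 - ‖z‖ ^ 2) * ((1 - ‖f w‖ ^ 2) / ‖1 - conj (f z) * f w‖ ^ 2) := by
  have hfw : ‖f w‖ < 1 := mem_ball_zero_iff.1 (hm (mem_ball_zero_iff.2 hw))
  have hfz : ‖f z‖ < 1 := mem_ball_zero_iff.1 (hm (mem_ball_zero_iff.2 hz))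
  have hpick := sub_le_sub_left
    (pow_le_pow_left₀ (norm_nonneg _) (norm_diskMobius_map_le hd hm hz hw) 2) 1
  rw [one_sub_norm_diskMobius_sq hz hw.le, one_sub_norm_diskMobius_sq hfz hfw.le] at hpick
  rw [div_mul_eq_mul_div, le_div_iff₀' (one_sub_norm_sq_pos hz)]
  simpa only [mul_div_assoc] using hpick

lemma tendsto_div_norm_sq_one_sub_conj_mul {α : Type*} {l : Filter α} {g : α → ℂ} {ζ w : ℂ}
    (hζ : ‖ζ‖ = 1) (hw : w ≠ ζ) (hg : Tendsto g l (𝓝 ζ)) :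
    Tendsto (fun x ↦ (1 - ‖w‖ ^ 2) / ‖1 - conj (g x) * w‖ ^ 2) l (𝓝 (poissonKernel 0 w ζ)) := by
  have hconj := (Complex.continuous_conj.tendsto ζ).comp hg
  have hden := (((hconj.mul_const w).const_sub 1).norm).pow 2
  rw [norm_one_sub_conj_mul_of_norm_eq_one hζ] at hden
  rw [poissonKernel_def, sub_zero, sub_zero, hζ, one_pow]
  exact tendsto_const_nhds.div hden (pow_ne_zero 2 (norm_sub_eq_zero_iff.not.2 hw.symm))

/-- **Julia's lemma**. -/
theorem poissonKernel_le_mul_poissonKernel_map {f : ℂ → ℂ} (hd : DifferentiableOn ℂ f (ball 0 1))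
    (hm : MapsTo f (ball 0 1) (ball 0 1)) {l : Filter ℂ} [l.NeBot] {ζ η : ℂ} {α : ℝ}
    (hζ : ‖ζ‖ = 1) (hη : ‖η‖ = 1) (hl : l ≤ 𝓝[ball 0 1] ζ) (hfl : Tendsto f l (𝓝 η))
    (hα : Tendsto (fun z ↦ (1 - ‖f z‖ ^ 2) / (1 - ‖z‖ ^ 2)) l (𝓝 α)) {w : ℂ} (hw : ‖w‖ < 1) :
    poissonKernel 0 w ζ ≤ α * poissonKernel 0 (f w) η := by
  have hfw : ‖f w‖ < 1 := mem_ball_zero_iff.1 (hm (mem_ball_zero_iff.2 hw))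
  refine le_of_tendsto_of_tendsto
    (tendsto_div_norm_sq_one_sub_conj_mul hζ ?_ (hl.trans nhdsWithin_le_nhds))
    (hα.mul (tendsto_div_norm_sq_one_sub_conj_mul hη ?_ hfl)) ?_
  · exact fun h ↦ hw.ne (h ▸ hζ)
  · exact fun h ↦ hfw.ne (h ▸ hη)
  · filter_upwards [hl self_mem_nhdsWithin] with z hz
    exact div_norm_sq_one_sub_conj_mul_le hd hm hw (mem_ball_zero_iff.1 hz)

section Harnack

variable {h : ℂ → ℂ} {R : ℝ} {z : ℂ}

/-- **Harnack's inequality**. -/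
lemma sub_mul_norm_le_of_re_nonneg (hd : DifferentiableOn ℂ h (ball 0 R))
    (hre : ∀ w ∈ ball 0 R, 0 ≤ (h w).re) (hz : z ∈ ball 0 R) :
    (R - ‖z‖) * ‖h z‖ ≤ (R + ‖z‖) * ‖h 0‖ := by
  have hzR : 0 < R - ‖z‖ := sub_pos.2 (mem_ball_zero_iff.1 hz)
  have hR : 0 < R := pos_of_mem_ball hz
  have bound (M : ℝ) (hM : 0 < M) :
      (R - ‖z‖) * ‖h z‖ ≤ 2 * M * ‖z‖ + (R + ‖z‖) * ‖h 0‖ := by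
    have hbc := Complex.borelCaratheodory hM hd.neg
      (fun w hw ↦ by simpa using (neg_nonpos.2 (hre w hw)).trans hM.le) hR hz
    rw [Pi.neg_apply, Pi.neg_apply, norm_neg, norm_neg, ← add_div, le_div_iff₀ hzR] at hbc
    linarith
  have hlim : Tendsto (fun M ↦ 2 * M * ‖z‖ + (R + ‖z‖) * ‖h 0‖) (𝓝[>] 0)
      (𝓝 ((R + ‖z‖) * ‖h 0‖)) :=
    tendsto_nhdsWithin_of_tendsto_nhds (Continuous.tendsto' (by fun_prop) _ _ (by simp))
  exact ge_of_tendsto hlim (eventually_mem_nhdsWithin.mono bound)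

lemma sub_mul_norm_zero_le_of_re_nonneg (hd : DifferentiableOn ℂ h (ball 0 R))
    (hre : ∀ w ∈ ball 0 R, 0 ≤ (h w).re) (hz : z ∈ ball 0 R) :
    (R - ‖z‖) * ‖h 0‖ ≤ (R + ‖z‖) * ‖h z‖ := by
  have h0 : (0 : ℂ) ∈ ball 0 R := mem_ball_self (pos_of_mem_ball hz)
  -- Apply the previous bound to `(h + ε)⁻¹`, whose real part is again nonnegative.
  have bound (ε : ℝ) (hε : 0 < ε) : (R - ‖z‖) * ‖h 0 + ε‖ ≤ (R + ‖z‖) * ‖h z + ε‖ := by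
    have hne : ∀ w ∈ ball 0 R, h w + ε ≠ 0 := fun w hw hw0 ↦ by
      have := congrArg Complex.re hw0
      simp only [Complex.add_re, Complex.ofReal_re, Complex.zero_re] at this
      linarith [hre w hw]
    have hinv := sub_mul_norm_le_of_re_nonneg (h := fun w ↦ (h w + ε)⁻¹)
      ((hd.add_const _).inv hne) (fun w hw ↦ ?_) hz
    · rw [norm_inv, norm_inv, ← div_eq_mul_inv, ← div_eq_mul_inv,
        div_le_div_iff₀ (norm_pos_iff.2 (hne z hz)) (norm_pos_iff.2 (hne 0 h0))] at hinv
      exact hinv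
    · rw [Complex.inv_re, Complex.add_re, Complex.ofReal_re]
      exact div_nonneg (add_nonneg (hre w hw) hε.le) (Complex.normSq_nonneg _)
  have hlim (a : ℝ) (c : ℂ) : Tendsto (fun ε : ℝ ↦ a * ‖c + ε‖) (𝓝[>] 0) (𝓝 (a * ‖c‖)) :=
    tendsto_nhdsWithin_of_tendsto_nhds (Continuous.tendsto' (by fun_prop) _ _ (by simp))
  exact le_of_tendsto_of_tendsto (hlim _ _) (hlim _ _) (eventually_mem_nhdsWithin.mono bound)

theorem eqOn_zero_of_re_nonneg_of_isLittleO (hd : DifferentiableOn ℂ h (ball 0 R))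
    (hre : ∀ w ∈ ball 0 R, 0 ≤ (h w).re) {l : Filter ℂ} [l.NeBot] (hl : l ≤ 𝓟 (ball 0 R))
    (ho : h =o[l] fun z ↦ R - ‖z‖) : EqOn h 0 (ball 0 R) := by
  have h0 : h 0 = 0 := by
    have hO : (fun z ↦ (R - ‖z‖) * ‖h 0‖) =O[l] h := by
      refine IsBigO.of_bound (2 * R) ?_
      filter_upwards [le_principal_iff.1 hl] with z hz
      have hzR := mem_ball_zero_iff.1 hz
      rw [Real.norm_of_nonneg (mul_nonneg (sub_nonneg.2 hzR.le) (norm_nonneg _))]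
      refine (sub_mul_norm_zero_le_of_re_nonneg hd hre hz).trans ?_
      gcongr
      linarith
    by_contra hne
    have hself : (fun z ↦ R - ‖z‖) =o[l] fun z ↦ R - ‖z‖ := by
      simpa only [mul_comm _ ‖h 0‖, isLittleO_const_mul_left_iff (norm_ne_zero_iff.2 hne)] using
        hO.trans_isLittleO ho
    refine isLittleO_irrefl' (Eventually.frequently ?_) hself
    filter_upwards [le_principal_iff.1 hl] with z hz
    exact norm_ne_zero_iff.2 (sub_pos.2 (mem_ball_zero_iff.1 hz)).ne'
  intro z hz
  have := sub_mul_norm_le_of_re_nonneg hd hre hz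
  rw [h0, norm_zero, mul_zero] at this
  exact norm_le_zero_iff.1 (nonpos_of_mul_nonpos_right this (sub_pos.2 (mem_ball_zero_iff.1 hz)))

end Harnack

section Tangency

variable {α : Type*} {l : Filter α}

lemma tendsto_one_sub_norm_sq_div {E : Type*} [SeminormedAddCommGroup E] {u v : α → E}
    (hu : ∀ᶠ x in l, ‖u x‖ ≤ 1) (hv : ∀ᶠ x in l, ‖v x‖ < 1)
    (h : (u - v) =o[l] fun x ↦ 1 - ‖v x‖) :
    Tendsto (fun x ↦ (1 - ‖u x‖ ^ 2) / (1 - ‖v x‖ ^ 2)) l (𝓝 1) := by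
  have hnum : (fun x ↦ (1 - ‖u x‖ ^ 2) - (1 - ‖v x‖ ^ 2)) =O[l] (u - v) := by
    refine IsBigO.of_bound 2 ?_
    filter_upwards [hu, hv] with x hux hvx
    calc ‖(1 - ‖u x‖ ^ 2) - (1 - ‖v x‖ ^ 2)‖ = (‖v x‖ + ‖u x‖) * |‖v x‖ - ‖u x‖| := by
          rw [sub_sub_sub_cancel_left, sq_sub_sq, norm_mul, Real.norm_eq_abs, Real.norm_eq_abs,
            abs_of_nonneg (by positivity)]
      _ ≤ 2 * ‖(u - v) x‖ := by
          rw [Pi.sub_apply, norm_sub_rev]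
          gcongr
          · linarith
          · exact abs_norm_sub_norm_le _ _
  have hden : (fun x ↦ 1 - ‖v x‖) =O[l] fun x ↦ 1 - ‖v x‖ ^ 2 := by
    refine IsBigO.of_bound' ?_
    filter_upwards [hv] with x hvx
    have hsq : ‖v x‖ ^ 2 ≤ ‖v x‖ := pow_le_of_le_one (norm_nonneg _) hvx.le two_ne_zero
    exact abs_le_abs_of_nonneg (sub_nonneg.2 hvx.le) (sub_le_sub_left hsq 1)
  have hne : ∀ᶠ x in l, 1 - ‖v x‖ ^ 2 ≠ 0 := hv.mono fun x hx ↦ (one_sub_norm_sq_pos hx).ne'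
  exact (isEquivalent_iff_tendsto_one hne).1 ((hnum.trans_isLittleO h).trans_isBigO hden)

lemma herglotzRieszKernel_zero_one_sub {u v : ℂ} (hu : 1 - u ≠ 0) (hv : 1 - v ≠ 0) :
    herglotzRieszKernel 0 u 1 - herglotzRieszKernel 0 v 1 =
      2 * (u - v) * ((1 - u) * (1 - v))⁻¹ := by
  simp only [herglotzRieszKernel_def, sub_zero]
  field_simp
  ring

lemma isLittleO_herglotzRieszKernel_sub {u v : α → ℂ} {g : α → ℝ} (hv : ∀ᶠ x in l, 1 - v x ≠ 0)
    (huv : (u - v) =o[l] (1 - v)) (h : (u - v) =o[l] fun x ↦ ‖1 - v x‖ ^ 2 * g x) :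
    (fun x ↦ herglotzRieszKernel 0 (u x) 1 - herglotzRieszKernel 0 (v x) 1) =o[l] g := by
  have hequiv : (1 - u) ~[l] (1 - v) := by
    rw [IsEquivalent, sub_sub_sub_cancel_left, ← neg_sub]
    exact huv.neg_left
  have hsq : (fun x ↦ ((1 - u x) * (1 - v x))⁻¹) =O[l] fun x ↦ (‖1 - v x‖ ^ 2)⁻¹ :=
    (hequiv.mul .refl).inv.isBigO.trans (isBigO_of_le _ fun x ↦ by simp [sq])
  have hprod := (h.const_mul_left 2).norm_left.mul_isBigO hsq.norm_left
  refine (hprod.congr' ?_ ?_).of_norm_left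
  · filter_upwards [hv, hequiv.isBigO_symm.eq_zero_imp] with x hvx hux
    rw [herglotzRieszKernel_zero_one_sub (mt hux hvx) hvx]
    simp only [norm_mul, Pi.sub_apply]
  · filter_upwards [hv] with x hvx
    have := norm_ne_zero_iff.2 hvx
    field_simp

end Tangency

lemma differentiableOn_herglotzRieszKernel_zero_one :
    DifferentiableOn ℂ (fun w ↦ herglotzRieszKernel 0 w 1) (ball 0 1) := fun w hw ↦ by
  have hne := one_sub_ne_zero_of_norm_lt_one (mem_ball_zero_iff.1 hw)
  simp only [herglotzRieszKernel_def, sub_zero]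
  fun_prop (disch := exact hne)

section

variable {f : ℂ → ℂ} {l : Filter ℂ} [l.NeBot]

lemma re_herglotzRieszKernel_sub_nonneg (hd : DifferentiableOn ℂ f (ball 0 1))
    (hm : MapsTo f (ball 0 1) (ball 0 1)) (hl : l ≤ 𝓝[ball 0 1] 1)
    (hf : (fun z ↦ f z - z) =o[l] fun z ↦ 1 - ‖z‖) {w : ℂ} (hw : ‖w‖ < 1) :
    0 ≤ (herglotzRieszKernel 0 (f w) 1 - herglotzRieszKernel 0 w 1).re := by
  have hmem : ∀ᶠ z in l, z ∈ ball (0 : ℂ) 1 := hl self_mem_nhdsWithin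
  have hid : Tendsto id l (𝓝 (1 : ℂ)) := hl.trans nhdsWithin_le_nhds
  have hfl : Tendsto f l (𝓝 1) := by
    have hdist : Tendsto (fun z ↦ 1 - ‖z‖) l (𝓝 0) := by simpa using hid.norm.const_sub 1
    simpa using (hf.trans_tendsto hdist).add hid
  have hratio : Tendsto (fun z ↦ (1 - ‖f z‖ ^ 2) / (1 - ‖z‖ ^ 2)) l (𝓝 1) :=
    tendsto_one_sub_norm_sq_div (v := id)
      (hmem.mono fun z hz ↦ (mem_ball_zero_iff.1 (hm hz)).le)
      (hmem.mono fun z hz ↦ mem_ball_zero_iff.1 hz) hf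
  have hjulia := poissonKernel_le_mul_poissonKernel_map hd hm norm_one norm_one hl hfl hratio hw
  rw [one_mul, poissonKernel_eq_re_herglotzRieszKernel, poissonKernel_eq_re_herglotzRieszKernel]
    at hjulia
  exact sub_nonneg.2 hjulia

theorem baracco_zaitsev_zampieri_general (hd : DifferentiableOn ℂ f (ball 0 1))
    (hm : MapsTo f (ball 0 1) (ball 0 1)) (hl : l ≤ 𝓝[ball 0 1] 1)
    (hf : (fun z ↦ f z - z) =o[l] fun z ↦ ‖1 - z‖ ^ 2 * (1 - ‖z‖)) :
    EqOn f id (ball 0 1) := by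
  have hmem : ∀ᶠ z in l, z ∈ ball (0 : ℂ) 1 := hl self_mem_nhdsWithin
  have hsub : Tendsto (fun z : ℂ ↦ 1 - z) l (𝓝 0) := by
    simpa using (tendsto_id'.2 (hl.trans nhdsWithin_le_nhds)).const_sub 1
  have hf₁ : (fun z ↦ f z - z) =o[l] fun z ↦ 1 - ‖z‖ := by
    have hbdd : (fun z : ℂ ↦ ‖1 - z‖ ^ 2) =O[l] fun _ ↦ (1 : ℝ) :=
      (hsub.norm.pow 2).isBigO_one ℝ
    simpa only [one_mul] using hf.trans_isBigO (hbdd.mul (isBigO_refl _ l))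
  have hf₂ : (fun z ↦ f z - z) =o[l] fun z ↦ 1 - z := by
    refine hf₁.trans_isBigO (IsBigO.of_bound' ?_)
    filter_upwards [hmem] with z hz
    rw [Real.norm_of_nonneg (sub_nonneg.2 (mem_ball_zero_iff.1 hz).le)]
    simpa using norm_sub_norm_le (1 : ℂ) z
  have hne : ∀ᶠ z in l, 1 - z ≠ 0 :=
    hmem.mono fun z hz ↦ one_sub_ne_zero_of_norm_lt_one (mem_ball_zero_iff.1 hz)
  have hzero := eqOn_zero_of_re_nonneg_of_isLittleO
    ((differentiableOn_herglotzRieszKernel_zero_one.comp hd hm).sub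
      differentiableOn_herglotzRieszKernel_zero_one)
    (fun w hw ↦ re_herglotzRieszKernel_sub_nonneg hd hm hl hf₁ (mem_ball_zero_iff.1 hw))
    (hl.trans inf_le_right)
    (isLittleO_herglotzRieszKernel_sub (u := f) (v := id) hne hf₂ hf)
  intro w hw
  have hw1 := one_sub_ne_zero_of_norm_lt_one (mem_ball_zero_iff.1 hw)
  have hfw1 := one_sub_ne_zero_of_norm_lt_one (mem_ball_zero_iff.1 (hm hw))
  have hker : herglotzRieszKernel 0 (f w) 1 - herglotzRieszKernel 0 w 1 = 0 := hzero hw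
  rw [herglotzRieszKernel_zero_one_sub hfw1 hw1] at hker
  simpa [hw1, hfw1, sub_eq_zero] using hker

end

lemma isLittleO_sq_mul_of_nontangential {α : Type*} {l : Filter α} {u z : α → ℂ} {M : ℝ}
    (hz : ∀ᶠ x in l, 1 - z x ≠ 0) (hnt : ∀ᶠ x in l, ‖1 - z x‖ ≤ M * (1 - ‖z x‖))
    (hu : Tendsto (fun x ↦ u x / ((‖1 - z x‖ ^ 3 : ℝ) : ℂ)) l (𝓝 0)) :
    u =o[l] fun x ↦ ‖1 - z x‖ ^ 2 * (1 - ‖z x‖) := by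
  have hcube : u =o[l] fun x ↦ ‖1 - z x‖ ^ 3 := by
    refine Complex.isLittleO_ofReal_right.1 (isLittleO_of_tendsto' ?_ hu)
    filter_upwards [hz] with x hx hx0
    simp [hx] at hx0
  have hO : (fun x ↦ ‖1 - z x‖) =O[l] fun x ↦ 1 - ‖z x‖ := by
    refine IsBigO.of_bound |M| ?_
    filter_upwards [hnt] with x hx
    rw [norm_norm, Real.norm_eq_abs, ← abs_mul]
    exact hx.trans (le_abs_self _)
  refine hcube.trans_isBigO ?_
  simpa only [pow_succ _ 2] using (isBigO_refl _ l).mul hO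

end

/-- **Baracco–Zaitsev–Zampieri.** Let `f` be a holomorphic self-map of the open unit
disk and `(z_n)` a sequence in the disk converging to `1` nontangentially, i.e.
`z_n → 1` and `|1 − z_n| ≤ M (1 − |z_n|)` for some constant `M > 0`. If
`f(z_n) = z_n + o(|1 − z_n|³)` as `n → ∞`, then `f` is the identity. -/
theorem baracco_zaitsev_zampieri (f : ℂ → ℂ)
    (hf_diff : ∀ z ∈ Metric.ball (0 : ℂ) 1, DifferentiableAt ℂ f z)
    (hf_maps : ∀ z ∈ Metric.ball (0 : ℂ) 1, ‖f z‖ < 1)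
    (z : ℕ → ℂ) (hz_mem : ∀ n, z n ∈ Metric.ball (0 : ℂ) 1)
    (hz_lim : Tendsto z atTop (nhds 1))
    (M : ℝ) (hM : 0 < M) (hz_nt : ∀ n, ‖1 - z n‖ ≤ M * (1 - ‖z n‖))
    (hlittleo : Tendsto (fun n => (f (z n) - z n) / ((‖1 - z n‖ ^ 3 : ℝ) : ℂ))
      atTop (nhds 0)) :
    ∀ w ∈ Metric.ball (0 : ℂ) 1, f w = w := by
  refine baracco_zaitsev_zampieri_general (l := map z atTop)
    (fun w hw ↦ (hf_diff w hw).differentiableWithinAt)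
    (fun w hw ↦ mem_ball_zero_iff.2 (hf_maps w hw))
    (tendsto_nhdsWithin_of_tendsto_nhds_of_eventually_within z hz_lim (.of_forall hz_mem))
    (Asymptotics.isLittleO_map.2 ?_)
  have hne (n : ℕ) : 1 - z n ≠ 0 := one_sub_ne_zero_of_norm_lt_one (mem_ball_zero_iff.1 (hz_mem n))
  exact isLittleO_sq_mul_of_nontangential (.of_forall hne) (.of_forall hz_nt) hlittleo
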